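/- Let X be a complex analytic Banach manifold, and let E₁ ↪ E₂ and F₂ ↪ F₁ be dense continuous embeddings of complex Banach spaces. Suppose A : X → L(E₁,F₁) is analytic, each A(z) extends to a bounded operator E₂ → F₂, and the map z ↦ A(z) is locally uniformly bounded in the L(E₂,F₂) operator norm. Then A is analytic as a map from X into L(E₂,F₂). -/

import Mathlib

open Metric Filter Topology

/-- Aliasing identity: averages over roots of unity of a power series. -/
lemma aux_alias (c : ℕ → ℂ) (g : ℂ → ℂ) (hg : ∀ t : ℂ, ‖t‖ < 1 → HasSum (fun n => c n * t ^ n) (g t))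
    (j N : ℕ) (hjN : j < N) (r : ℝ) (hr0 : 0 < r) (hr1 : r < 1) (ω : ℂ) (hω : IsPrimitiveRoot ω N) :
    HasSum (fun m : ℕ => ((r : ℂ) ^ N) ^ m * c (j + m * N))
      (∑ k ∈ Finset.range N, ((N : ℂ)⁻¹ * ((r : ℂ) ^ j)⁻¹ * ω ^ (k * (N - j))) * g (r * ω ^ k)) := by
  have hN : N ≠ 0 := by omega
  have hωn : ‖ω‖ = 1 := hω.norm'_eq_one hN
  have hr : (r : ℂ) ≠ 0 := by exact_mod_cast hr0.ne'
  have hNc : (N : ℂ) ≠ 0 := by exact_mod_cast hN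
  have h1 : HasSum (fun n : ℕ => ∑ k ∈ Finset.range N,
      ((N : ℂ)⁻¹ * ((r : ℂ) ^ j)⁻¹ * ω ^ (k * (N - j))) * (c n * (r * ω ^ k) ^ n))
      (∑ k ∈ Finset.range N, ((N : ℂ)⁻¹ * ((r : ℂ) ^ j)⁻¹ * ω ^ (k * (N - j))) * g (r * ω ^ k)) := by
    apply hasSum_sum
    intro k _
    apply HasSum.mul_left
    apply hg
    simp [hωn, abs_of_pos hr0, hr1]
  have h2 : ∀ n : ℕ, ∑ k ∈ Finset.range N,
      ((N : ℂ)⁻¹ * ((r : ℂ) ^ j)⁻¹ * ω ^ (k * (N - j))) * (c n * (r * ω ^ k) ^ n) =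
      ((N : ℂ)⁻¹ * ((r : ℂ) ^ j)⁻¹ * c n * r ^ n) * ∑ k ∈ Finset.range N, (ω ^ (n + (N - j))) ^ k := by
    intro n
    rw [Finset.mul_sum]
    refine Finset.sum_congr rfl fun k _ => ?_
    rw [mul_pow, ← pow_mul, ← pow_mul, add_mul, pow_add, mul_comm n k, mul_comm (N - j) k]
    ring
  have hinj : Function.Injective (fun m : ℕ => j + m * N) := by
    intro a b hab
    simpa [hN] using hab
  have h3 := (hinj.hasSum_iff (a := ∑ k ∈ Finset.range N, ((N : ℂ)⁻¹ * ((r : ℂ) ^ j)⁻¹ * ω ^ (k * (N - j))) * g (r * ω ^ k)) (f := fun n : ℕ => ∑ k ∈ Finset.range N,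
      ((N : ℂ)⁻¹ * ((r : ℂ) ^ j)⁻¹ * ω ^ (k * (N - j))) * (c n * (r * ω ^ k) ^ n)) ?_).2 h1
  · convert h3 using 2 with m
    simp only [Function.comp]
    rw [h2]
    have : ω ^ (j + m * N + (N - j)) = 1 := by
      rw [show j + m * N + (N - j) = N * (m + 1) by rw [mul_add, mul_comm]; omega, pow_mul, hω.pow_eq_one, one_pow]
    rw [this]
    simp only [one_pow, Finset.sum_const, Finset.card_range, nsmul_eq_mul, mul_one]
    rw [pow_add, ← pow_mul, mul_comm N m]
    field_simp
  · intro n hn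
    rw [h2]
    have hne : ω ^ (n + (N - j)) ≠ 1 := by
      intro h
      rw [hω.pow_eq_one_iff_dvd] at h
      obtain ⟨d, hd⟩ := h
      apply hn
      have hd0 : d ≠ 0 := by
        rintro rfl
        omega
      obtain ⟨e, rfl⟩ := Nat.exists_eq_succ_of_ne_zero hd0
      refine ⟨e, ?_⟩
      simp only [Nat.succ_eq_add_one, mul_add, mul_one] at hd
      simp only [mul_comm e N]
      omega
    rw [geom_sum_eq hne, ← pow_mul, mul_comm _ N, pow_mul, hω.pow_eq_one]
    simp

lemma aux_radius (j : ℕ) : ∃ (r : ℝ) (N : ℕ), 0 < r ∧ r < 1 ∧ (r ^ j)⁻¹ ≤ 2 ∧ j < N ∧ r ^ N ≤ 1 / 4 := by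
  have hc : Tendsto (fun r : ℝ => (r ^ j)⁻¹) (𝓝[<] 1) (𝓝 1) := by
    have : ContinuousAt (fun r : ℝ => (r ^ j)⁻¹) 1 := by
      apply ContinuousAt.inv₀ (by fun_prop) (by simp)
    have h := this.tendsto
    simp only [one_pow, inv_one] at h
    exact h.mono_left nhdsWithin_le_nhds
  have h1 : ∀ᶠ r : ℝ in 𝓝[<] 1, (r ^ j)⁻¹ < 2 := hc.eventually (gt_mem_nhds (by norm_num))
  have h2 : ∀ᶠ r : ℝ in 𝓝[<] 1, 0 < r := 
    (lt_mem_nhds (by norm_num : (0:ℝ) < 1)).filter_mono nhdsWithin_le_nhds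
  obtain ⟨r, hr, hr0, hr1⟩ := (h1.and (h2.and self_mem_nhdsWithin)).exists
  have hr1' : r < 1 := hr1
  have h4 := (tendsto_pow_atTop_nhds_zero_of_lt_one hr0.le hr1').eventually (gt_mem_nhds (by norm_num : (0:ℝ) < 1/4))
  obtain ⟨N, hN, hjN⟩ := (h4.and (eventually_gt_atTop j)).exists
  exact ⟨r, N, hr0, hr1', hr.le, hjN, hN.le⟩

lemma aux_tail {Y : Type*} [NormedAddCommGroup Y] [NormedSpace ℂ Y] [CompleteSpace Y]
    (s : ℂ) (hs : ‖s‖ ≤ 1 / 4) (y : ℕ → Y) (C : ℝ) (hC : ∀ n, ‖y n‖ ≤ C) :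
    Summable (fun m => s ^ (m + 1) • y m) ∧ ‖∑' m, s ^ (m + 1) • y m‖ ≤ C / 3 := by
  have hC0 : 0 ≤ C := (norm_nonneg _).trans (hC 0)
  have hg : HasSum (fun m : ℕ => C * (1 / 4) * (1 / 4 : ℝ) ^ m) (C * (1 / 4) * (1 - 1 / 4)⁻¹) :=
    (hasSum_geometric_of_lt_one (by norm_num) (by norm_num)).mul_left _
  have hb : ∀ m, ‖s ^ (m + 1) • y m‖ ≤ C * (1 / 4) * (1 / 4 : ℝ) ^ m := by
    intro m
    rw [norm_smul, norm_pow]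
    calc ‖s‖ ^ (m + 1) * ‖y m‖ ≤ (1 / 4) ^ (m + 1) * C := by
          gcongr
          exact hC m
      _ = _ := by ring
  refine ⟨Summable.of_norm_bounded hg.summable hb, ?_⟩
  refine (tsum_of_norm_bounded hg hb).trans (le_of_eq ?_)
  norm_num
  ring

lemma aux_solve {Y : Type*} [NormedAddCommGroup Y] [NormedSpace ℂ Y] [CompleteSpace Y]
    (s : ℕ → ℂ) (hs : ∀ j, ‖s j‖ ≤ 1 / 4) (N : ℕ → ℕ) (E : ℕ → Y) (M : ℝ) (hE : ∀ j, ‖E j‖ ≤ 2 * M) :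
    ∃ y : ℕ → Y, (∀ j, ‖y j‖ ≤ 3 * M) ∧
      ∀ j, HasSum (fun m => s j ^ m • y (j + m * N j)) (E j) := by
  let Φ : BoundedContinuousFunction ℕ Y → BoundedContinuousFunction ℕ Y := fun y =>
    BoundedContinuousFunction.ofNormedAddCommGroupDiscrete
      (fun j => E j - ∑' m, s j ^ (m + 1) • y (j + (m + 1) * N j)) (2 * M + ‖y‖ / 3) (fun j =>
        (norm_sub_le _ _).trans (add_le_add (hE j)
          (aux_tail (s j) (hs j) (fun m => y (j + (m + 1) * N j)) ‖y‖ (fun m => y.norm_coe_le_norm _)).2))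
  have hΦ : ∀ y j, Φ y j = E j - ∑' m, s j ^ (m + 1) • y (j + (m + 1) * N j) := fun y j => rfl
  have hsum : ∀ (y : BoundedContinuousFunction ℕ Y) j,
      Summable (fun m => s j ^ (m + 1) • y (j + (m + 1) * N j)) := fun y j =>
    (aux_tail (s j) (hs j) (fun m => y (j + (m + 1) * N j)) ‖y‖ (fun m => y.norm_coe_le_norm _)).1
  have hcon : ContractingWith (1 / 3) Φ := by
    refine ⟨by
      rw [← NNReal.coe_lt_coe]
      norm_num, LipschitzWith.of_dist_le_mul fun y z => ?_⟩
    rw [BoundedContinuousFunction.dist_le (by positivity)]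
    intro j
    rw [hΦ, hΦ, dist_eq_norm, sub_sub_sub_cancel_left, ← (hsum z j).tsum_sub (hsum y j)]
    have := (aux_tail (s j) (hs j) (fun m => (z - y) (j + (m + 1) * N j)) ‖z - y‖
      (fun m => (z - y).norm_coe_le_norm _)).2
    simp only [BoundedContinuousFunction.coe_sub, Pi.sub_apply, smul_sub] at this
    refine this.trans (le_of_eq ?_)
    rw [dist_eq_norm, norm_sub_rev]
    push_cast
    ring
  obtain ⟨y, hy⟩ : ∃ y, Φ y = y := ⟨_, hcon.fixedPoint_isFixedPt⟩
  have hyj : ∀ j, y j = E j - ∑' m, s j ^ (m + 1) • y (j + (m + 1) * N j) := by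
    intro j
    rw [← hΦ, hy]
  have hM : 0 ≤ 2 * M := (norm_nonneg _).trans (hE 0)
  have hny : ‖y‖ ≤ 2 * M + ‖y‖ / 3 := by
    rw [BoundedContinuousFunction.norm_le (by positivity)]
    intro j
    rw [hyj]
    exact (norm_sub_le _ _).trans (add_le_add (hE j)
          (aux_tail (s j) (hs j) (fun m => y (j + (m + 1) * N j)) ‖y‖ (fun m => y.norm_coe_le_norm _)).2)
  refine ⟨y, fun j => (y.norm_coe_le_norm j).trans (by linarith), fun j => ?_⟩
  rw [← hasSum_nat_add_iff' 1]
  simp only [Finset.range_one, Finset.sum_singleton, pow_zero, zero_mul, add_zero, one_smul]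
  rw [hyj j, sub_sub_cancel]
  exact (hsum y j).hasSum

lemma aux_unique (s : ℕ → ℂ) (hs : ∀ j, ‖s j‖ ≤ 1 / 4) (N : ℕ → ℕ) (d : ℕ → ℂ) (C : ℝ)
    (hC : ∀ j, ‖d j‖ ≤ C) (hd : ∀ j, HasSum (fun m => s j ^ m * d (j + m * N j)) 0) : ∀ j, d j = 0 := by
  have key : ∀ n : ℕ, ∀ j, ‖d j‖ ≤ C * (1 / 3) ^ n := by
    intro n
    induction n with
    | zero => simpa using hC
    | succ n ih =>
      intro j
      have h1 := hd j
      rw [← hasSum_nat_add_iff' 1] at h1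
      simp only [Finset.range_one, Finset.sum_singleton, pow_zero, zero_mul, add_zero, one_mul] at h1
      have h2 := (aux_tail (s j) (hs j) (fun m => d (j + (m + 1) * N j)) _ (fun m => ih _)).2
      simp only [smul_eq_mul] at h2
      rw [h1.tsum_eq, zero_sub, norm_neg] at h2
      refine h2.trans (le_of_eq ?_)
      ring
  intro j
  have h0 : Tendsto (fun n : ℕ => C * (1 / 3 : ℝ) ^ n) atTop (𝓝 (C * 0)) :=
    (tendsto_pow_atTop_nhds_zero_of_lt_one (by norm_num) (by norm_num)).const_mul C
  have := ge_of_tendsto' h0 (fun n => key n j)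
  simpa using this

lemma aux_one {Y : Type*} [NormedAddCommGroup Y] [NormedSpace ℂ Y] [CompleteSpace Y]
    (S : Set (Y →L[ℂ] ℂ)) (hS : ∀ x : Y, (∀ l ∈ S, l x = 0) → x = 0)
    (g : ℂ → Y) (M : ℝ) (hM : ∀ t : ℂ, ‖t‖ < 1 → ‖g t‖ ≤ M)
    (hg : ∀ l ∈ S, DifferentiableOn ℂ (fun t => l (g t)) (closedBall 0 2)) :
    ∃ y : ℕ → Y, (∀ n, ‖y n‖ ≤ 3 * M) ∧ (∀ t : ℂ, ‖t‖ < 1 → HasSum (fun n => t ^ n • y n) (g t)) ∧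
      ∀ l ∈ S, l (y 1) = deriv (fun t => l (g t)) 0 := by
  have hM0 : 0 ≤ M := (norm_nonneg _).trans (hM 0 (by simp))
  choose r N hr0 hr1 hrj hjN hrN using aux_radius
  have hω : ∀ j, IsPrimitiveRoot (Complex.exp (2 * Real.pi * Complex.I / (N j : ℂ))) (N j) := fun j =>
    Complex.isPrimitiveRoot_exp (N j) (by have := hjN j; omega)
  set ω : ℕ → ℂ := fun j => Complex.exp (2 * Real.pi * Complex.I / (N j : ℂ)) with hωdef
  let w : ℕ → ℕ → ℂ := fun j k => ((N j : ℂ)⁻¹ * ((r j : ℂ) ^ j)⁻¹ * (ω j) ^ (k * (N j - j)))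
  let E : ℕ → Y := fun j => ∑ k ∈ Finset.range (N j), w j k • g (r j * ω j ^ k)
  have hωn : ∀ j, ‖ω j‖ = 1 := fun j => (hω j).norm'_eq_one (by have := hjN j; omega)
  have hE : ∀ j, ‖E j‖ ≤ 2 * M := by
    intro j
    have hNpos : (0 : ℝ) < N j := by
      have := hjN j
      exact_mod_cast (by omega : 0 < N j)
    calc ‖E j‖ ≤ ∑ k ∈ Finset.range (N j), ((N j : ℝ)⁻¹ * (2 * M)) := by
          refine norm_sum_le_of_le _ fun k _ => ?_
          rw [norm_smul]
          have h1 : ‖w j k‖ = (N j : ℝ)⁻¹ * ((r j) ^ j)⁻¹ := by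
            simp [w, hωn, abs_of_pos (hr0 j)]
          rw [h1, mul_assoc]
          have h2 : ‖g (r j * ω j ^ k)‖ ≤ M := hM _ (by simp [hωn, abs_of_pos (hr0 j), hr1 j])
          have h3 := hrj j
          gcongr
      _ = 2 * M := by
          rw [Finset.sum_const, Finset.card_range, nsmul_eq_mul]
          field_simp
  let s : ℕ → ℂ := fun j => (r j : ℂ) ^ N j
  have hs : ∀ j, ‖s j‖ ≤ 1 / 4 := by
    intro j
    simpa [s, abs_of_pos (hr0 j)] using hrN j
  obtain ⟨y, hyb, hy⟩ := aux_solve s hs N E M hE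
  have main : ∀ l ∈ S, ∃ c : ℕ → ℂ, (∀ n, l (y n) = c n) ∧
      (∀ t : ℂ, ‖t‖ < 1 → HasSum (fun n => c n * t ^ n) (l (g t))) ∧ c 1 = deriv (fun t => l (g t)) 0 := by
    intro l hl
    have hp := DifferentiableOn.hasFPowerSeriesOnBall (R := 2) (c := 0) (f := fun t => l (g t)) 
      (by simpa using hg l hl) (by norm_num)
    set p := cauchyPowerSeries (fun t => l (g t)) 0 ((2 : NNReal) : ℝ) with hpdef
    obtain ⟨C, hC0, hC⟩ := p.norm_mul_pow_le_of_lt_radius (r := 1)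
      (lt_of_lt_of_le (by norm_num) hp.r_le)
    have hc : ∀ t : ℂ, ‖t‖ < 1 → HasSum (fun n => p.coeff n * t ^ n) (l (g t)) := by
      intro t ht
      have := hp.hasSum (y := t) (by
        rw [Metric.mem_eball, edist_zero_right, ← ofReal_norm, ENNReal.ofReal_lt_coe_iff] 
        · simp; linarith
        · simp)
      simpa [mul_comm] using this
    refine ⟨fun n => p.coeff n, ?_, hc, hp.hasFPowerSeriesAt.deriv.symm⟩
    have hcb : ∀ n, ‖p.coeff n‖ ≤ C := by
      intro n
      have := hC n
      simpa [FormalMultilinearSeries.norm_apply_eq_norm_coef] using this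
    have hz := aux_unique s hs N (fun n => l (y n) - p.coeff n) (‖l‖ * (3 * M) + C) (fun j =>
      (norm_sub_le _ _).trans (add_le_add ((l.le_opNorm _).trans (by gcongr; exact hyb j)) (hcb j))) (fun j => by
        have h1 := l.hasSum (hy j)
        have h2 := aux_alias (fun n => p.coeff n) _ hc j (N j) (hjN j) (r j) (hr0 j) (hr1 j) (ω j) (hω j)
        have h3 := h1.sub h2
        simp only [E, map_sum, map_smul, smul_eq_mul, w, sub_self] at h3
        simpa only [mul_sub] using h3)
    intro n
    exact sub_eq_zero.1 (hz n)
  refine ⟨y, hyb, ?_, ?_⟩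
  · intro t ht
    have hsum : Summable (fun n => t ^ n • y n) := by
      refine Summable.of_norm_bounded (g := fun n => ‖t‖ ^ n * (3 * M))
        ((summable_geometric_of_lt_one (norm_nonneg _) ht).mul_right _) fun n => ?_
      rw [norm_smul, norm_pow]
      gcongr
      exact hyb n
    have heq : ∑' n, t ^ n • y n = g t := by
      rw [← sub_eq_zero]
      refine hS _ fun l hl => ?_
      obtain ⟨c, hc, hct, -⟩ := main l hl
      have h1 := l.hasSum hsum.hasSum
      have h2 : (fun n => l (t ^ n • y n)) = fun n => c n * t ^ n := by
        ext n
        rw [map_smul, hc, smul_eq_mul, mul_comm]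
      rw [h2] at h1
      rw [map_sub, h1.unique (hct t ht), sub_self]
    rw [← heq]
    exact hsum.hasSum
  · intro l hl
    obtain ⟨c, hc, -, hd⟩ := main l hl
    rw [hc, hd]

lemma aux_step {Z G : Type*} [NormedAddCommGroup Z] [NormedSpace ℂ Z]
    [NormedAddCommGroup G] [NormedSpace ℂ G] [CompleteSpace G]
    (S : Set (G →L[ℂ] ℂ)) (hS : ∀ x : G, (∀ l ∈ S, l x = 0) → x = 0)
    (f : Z → G) (z : Z) (ρ M : ℝ) (hρ : 0 < ρ) (hM : ∀ w ∈ ball z ρ, ‖f w‖ ≤ M)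
    (hf : ∀ l ∈ S, DifferentiableOn ℂ (fun w => l (f w)) (ball z ρ)) :
    ∃ D : Z →L[ℂ] G, HasFDerivAt f D z ∧ ‖D‖ ≤ 9 * M / ρ := by
  have hM0 : 0 ≤ M := (norm_nonneg _).trans (hM z (mem_ball_self hρ))
  have h1 : ∀ v : Z, ‖v‖ ≤ ρ / 3 → ∃ d : G, ‖d‖ ≤ 3 * M ∧
      (∀ l ∈ S, l d = fderiv ℂ (fun w => l (f w)) z v) ∧
      ∀ t : ℂ, ‖t‖ ≤ 1 / 2 → ‖f (z + t • v) - f z - t • d‖ ≤ 6 * M * ‖t‖ ^ 2 := by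
    intro v hv
    have hmem : ∀ t : ℂ, ‖t‖ ≤ 2 → z + t • v ∈ ball z ρ := by
      intro t ht
      rw [mem_ball, dist_eq_norm, add_sub_cancel_left, norm_smul]
      nlinarith [norm_nonneg v, norm_nonneg t]
    obtain ⟨y, hyb, hy, hyd⟩ := aux_one S hS (fun t => f (z + t • v)) M
      (fun t ht => hM _ (hmem t (by linarith))) (fun l hl => by
        refine (hf l hl).comp (g := fun w => l (f w)) (f := fun t : ℂ => z + t • v) ?_ ?_
        · fun_prop
        · intro t ht
          exact hmem t (by simpa using ht))
    refine ⟨y 1, hyb 1, ?_, ?_⟩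
    · intro l hl
      rw [hyd l hl]
      have hd : DifferentiableAt ℂ (fun w => l (f w)) z :=
        (hf l hl).differentiableAt (ball_mem_nhds z hρ)
      have hd' : HasFDerivAt (fun w => l (f w)) (fderiv ℂ (fun w => l (f w)) z) (z + (0:ℂ) • v) := by
        simpa using hd.hasFDerivAt
      have hc : HasDerivAt (fun t : ℂ => z + t • v) v 0 := by
        simpa using ((hasDerivAt_id (0:ℂ)).smul_const v).const_add z
      exact (hd'.comp_hasDerivAt (0:ℂ) hc).deriv
    · intro t ht
      have ht1 : ‖t‖ < 1 := by linarith
      have hy0 : y 0 = f z := by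
        have h := (hy 0 (by simp)).unique (hasSum_single (f := fun n => (0:ℂ) ^ n • y n) 0 (fun n hn => by simp [hn]))
        simpa using h.symm
      have hsum := hy t ht1
      rw [← hasSum_nat_add_iff' 2] at hsum
      simp only [Finset.sum_range_succ, Finset.range_zero, Finset.sum_empty, pow_zero, one_smul, zero_add,
        pow_one, hy0] at hsum
      rw [sub_sub, ← hsum.tsum_eq]
      have hg : HasSum (fun n : ℕ => 3 * M * ‖t‖ ^ 2 * ‖t‖ ^ n) (3 * M * ‖t‖ ^ 2 * (1 - ‖t‖)⁻¹) :=
        (hasSum_geometric_of_lt_one (norm_nonneg _) ht1).mul_left _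
      refine (tsum_of_norm_bounded hg fun n => ?_).trans ?_
      · rw [norm_smul, norm_pow, pow_add]
        have := mul_le_mul_of_nonneg_left (hyb (n + 2)) (by positivity : 0 ≤ ‖t‖ ^ n * ‖t‖ ^ 2)
        linarith
      · have : (1 - ‖t‖)⁻¹ ≤ 2 := by
          rw [inv_le_comm₀ (by linarith) (by norm_num)]
          linarith
        have := mul_le_mul_of_nonneg_left this (by positivity : 0 ≤ 3 * M * ‖t‖ ^ 2)
        linarith
  have h2 : ∀ h : Z, ∃ d : G, ‖d‖ ≤ 9 * M / ρ * ‖h‖ ∧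
      (∀ l ∈ S, l d = fderiv ℂ (fun w => l (f w)) z h) ∧
      (‖h‖ ≤ ρ / 6 → ‖f (z + h) - f z - d‖ ≤ 54 * M / ρ ^ 2 * ‖h‖ ^ 2) := by
    intro h
    rcases eq_or_ne h 0 with rfl | hh
    · exact ⟨0, by simp, by simp, by simp⟩
    have hn : 0 < ‖h‖ := norm_pos_iff.2 hh
    obtain ⟨a, ha, ha'⟩ : ∃ a : ℝ, 0 < a ∧ a * ρ = 3 * ‖h‖ := ⟨3 * ‖h‖ / ρ, by positivity, by field_simp⟩
    have hac : (a : ℂ) ≠ 0 := by exact_mod_cast ha.ne'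
    have haeq : a = 3 * ‖h‖ / ρ := by field_simp; linarith
    obtain ⟨d, hd1, hd2, hd3⟩ := h1 ((a : ℂ)⁻¹ • h) (by
      rw [norm_smul, norm_inv, Complex.norm_real, Real.norm_of_nonneg ha.le]
      rw [inv_mul_le_iff₀ ha]
      linarith)
    refine ⟨(a : ℂ) • d, ?_, ?_, ?_⟩
    · rw [norm_smul, Complex.norm_real, Real.norm_of_nonneg ha.le]
      calc a * ‖d‖ ≤ a * (3 * M) := by gcongr
        _ = _ := by rw [haeq]; ring
    · intro l hl
      rw [map_smul, hd2 l hl, ← map_smul, smul_inv_smul₀ hac]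
    · intro hle
      have := hd3 a (by
        rw [Complex.norm_real, Real.norm_of_nonneg ha.le]
        nlinarith)
      rw [smul_inv_smul₀ hac, Complex.norm_real, Real.norm_of_nonneg ha.le] at this
      refine this.trans (le_of_eq ?_)
      rw [haeq]
      ring
  choose D hD1 hD2 hD3 using h2
  let L : Z →ₗ[ℂ] G :=
    { toFun := D
      map_add' := fun x y => by
        rw [← sub_eq_zero]
        refine hS _ fun l hl => ?_
        rw [map_sub, map_add, hD2 _ l hl, hD2 _ l hl, hD2 _ l hl, map_add, sub_self]
      map_smul' := fun c x => by
        rw [← sub_eq_zero]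
        refine hS _ fun l hl => ?_
        simp only [RingHom.id_apply]
        rw [map_sub, map_smul, hD2 _ l hl, hD2 _ l hl, map_smul, sub_self] }
  refine ⟨L.mkContinuous (9 * M / ρ) hD1, ?_, L.mkContinuous_norm_le (by positivity) _⟩
  rw [hasFDerivAt_iff_isLittleO_nhds_zero]
  have hO : (fun h => f (z + h) - f z - (L.mkContinuous (9 * M / ρ) hD1) h) =O[𝓝 0] fun h : Z => ‖h‖ ^ 2 := by
    refine Asymptotics.IsBigO.of_bound (54 * M / ρ ^ 2) ?_
    filter_upwards [closedBall_mem_nhds (0 : Z) (by positivity : 0 < ρ / 6)] with h hh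
    rw [norm_pow, norm_norm]
    exact hD3 h (by simpa using hh)
  refine hO.trans_isLittleO ?_
  have : (fun h : Z => ‖h‖ ^ 2) =o[𝓝 0] fun h : Z => ‖h‖ ^ 1 :=
    (Asymptotics.isLittleO_pow_pow (𝕜 := ℝ) (by norm_num : 1 < 2)).comp_tendsto tendsto_norm_zero
  simp only [pow_one] at this
  exact this.of_norm_right

lemma aux_iter {Z G : Type*} [NormedAddCommGroup Z] [NormedSpace ℂ Z]
    [NormedAddCommGroup G] [NormedSpace ℂ G] [CompleteSpace G]
    (S : Set (G →L[ℂ] ℂ)) (hS : ∀ x : G, (∀ l ∈ S, l x = 0) → x = 0)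
    (f : Z → G) (z₀ : Z) (R M δ : ℝ) (hδ : 0 < δ) (hM : ∀ w ∈ ball z₀ R, ‖f w‖ ≤ M)
    (hf : ∀ l ∈ S, AnalyticOnNhd ℂ (fun w => l (f w)) (ball z₀ R)) (k : ℕ) :
    (∀ z ∈ ball z₀ (R - k * δ), ‖iteratedFDeriv ℂ k f z‖ ≤ M * (9 / δ) ^ k) ∧
    (∀ z ∈ ball z₀ (R - k * δ), ∀ l ∈ S, ∀ h : Fin k → Z,
      l (iteratedFDeriv ℂ k f z h) = iteratedFDeriv ℂ k (fun w => l (f w)) z h) := by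
  induction k with
  | zero => simpa using hM
  | succ k ih =>
    obtain ⟨ih1, ih2⟩ := ih
    have hsub : ∀ z ∈ ball z₀ (R - (k + 1 : ℕ) * δ), ball z δ ⊆ ball z₀ (R - k * δ) := by
      intro z hz
      apply ball_subset_ball'
      rw [mem_ball] at hz
      push_cast at hz
      linarith
    have hsub2 : ball z₀ (R - k * δ) ⊆ ball z₀ R := by
      apply ball_subset_ball
      have : 0 ≤ k * δ := by positivity
      linarith
    have hstep : ∀ z ∈ ball z₀ (R - (k + 1 : ℕ) * δ), ∃ D : Z →L[ℂ] (ContinuousMultilinearMap ℂ (fun _ : Fin k => Z) G),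
        HasFDerivAt (iteratedFDeriv ℂ k f) D z ∧
        ‖D‖ ≤ 9 * (M * (9 / δ) ^ k) / δ := by
      intro z hz
      refine aux_step {T | ∃ l ∈ S, ∃ h : Fin k → Z,
        T = l ∘L (ContinuousMultilinearMap.apply ℂ (fun _ : Fin k => Z) G h)} ?_ _ z δ _ hδ
        (fun w hw => ih1 w (hsub z hz hw)) ?_
      · intro T hT
        ext h
        refine hS _ fun l hl => ?_
        exact hT _ ⟨l, hl, h, rfl⟩
      · rintro _ ⟨l, hl, h, rfl⟩
        have h1 : DifferentiableOn ℂ (fun w => iteratedFDeriv ℂ k (fun w => l (f w)) w h) (ball z δ) := by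
          intro w hw
          have := ((hf l hl).iteratedFDeriv k w (hsub2 (hsub z hz hw))).differentiableAt
          exact ((ContinuousMultilinearMap.apply ℂ (fun _ : Fin k => Z) ℂ h).differentiableAt.comp w
            this).differentiableWithinAt
        refine h1.congr fun w hw => ?_
        exact ih2 w (hsub z hz hw) l hl h
    constructor
    · intro z hz
      obtain ⟨D, hD, hDn⟩ := hstep z hz
      rw [← norm_fderiv_iteratedFDeriv, hD.fderiv]
      refine hDn.trans (le_of_eq ?_)
      rw [pow_succ]
      ring
    · intro z hz l hl h
      obtain ⟨D, hD, hDn⟩ := hstep z hz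
      rw [iteratedFDeriv_succ_apply_left, iteratedFDeriv_succ_apply_left, hD.fderiv]
      have hz' : z ∈ ball z₀ (R - k * δ) := hsub z hz (mem_ball_self hδ)
      have e1 : HasFDerivAt (fun w => l (iteratedFDeriv ℂ k f w (Fin.tail h)))
          ((l ∘L (ContinuousMultilinearMap.apply ℂ (fun _ : Fin k => Z) G (Fin.tail h))) ∘L D) z :=
        (l ∘L (ContinuousMultilinearMap.apply ℂ (fun _ : Fin k => Z) G (Fin.tail h))).hasFDerivAt.comp z hD
      have e2 : HasFDerivAt (fun w => iteratedFDeriv ℂ k (fun w => l (f w)) w (Fin.tail h))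
          ((ContinuousMultilinearMap.apply ℂ (fun _ : Fin k => Z) ℂ (Fin.tail h)) ∘L
            (fderiv ℂ (iteratedFDeriv ℂ k (fun w => l (f w))) z)) z :=
        (ContinuousMultilinearMap.apply ℂ (fun _ : Fin k => Z) ℂ (Fin.tail h)).hasFDerivAt.comp z
          ((hf l hl).iteratedFDeriv k z (hsub2 hz')).differentiableAt.hasFDerivAt
      have e3 : (fun w => iteratedFDeriv ℂ k (fun w => l (f w)) w (Fin.tail h)) =ᶠ[𝓝 z]
          (fun w => l (iteratedFDeriv ℂ k f w (Fin.tail h))) := by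
        filter_upwards [isOpen_ball.mem_nhds hz'] with w hw
        exact (ih2 w hw l hl _).symm
      have := (e1.congr_of_eventuallyEq e3).unique e2
      exact congrArg (fun T : Z →L[ℂ] ℂ => T (h 0)) this

lemma aux_analytic {Z G : Type*} [NormedAddCommGroup Z] [NormedSpace ℂ Z]
    [NormedAddCommGroup G] [NormedSpace ℂ G] [CompleteSpace G]
    (S : Set (G →L[ℂ] ℂ)) (hS : ∀ x : G, (∀ l ∈ S, l x = 0) → x = 0)
    (f : Z → G) (z₀ : Z) (R M : ℝ) (hR : 0 < R) (hM : ∀ w ∈ ball z₀ R, ‖f w‖ ≤ M)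
    (hf : ∀ l ∈ S, AnalyticOnNhd ℂ (fun w => l (f w)) (ball z₀ R)) :
    AnalyticAt ℂ f z₀ := by
  have hM0 : 0 ≤ M := (norm_nonneg _).trans (hM z₀ (mem_ball_self hR))
  let q : FormalMultilinearSeries ℂ Z G := fun n => ((n.factorial : ℂ)⁻¹) • iteratedFDeriv ℂ n f z₀
  have hδ : ∀ n : ℕ, 0 < R / (n + 1) := fun n => by positivity
  have hmem : ∀ n : ℕ, z₀ ∈ ball z₀ (R - n * (R / (n + 1))) := by
    intro n
    apply mem_ball_self
    have : R - n * (R / (n + 1)) = R / (n + 1) := by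
      field_simp
      ring
    rw [this]
    exact hδ n
  have hq1 : ∀ n, ‖q n‖ ≤ M * Real.exp 1 * (9 * Real.exp 1 / R) ^ n := by
    intro n
    have h1 := (aux_iter S hS f z₀ R M (R / (n + 1)) (hδ n) hM hf n).1 z₀ (hmem n)
    have h2 := Real.pow_div_factorial_le_exp (x := (n + 1 : ℝ)) (by positivity) n
    have h3 : Real.exp (n + 1 : ℝ) = Real.exp 1 ^ n * Real.exp 1 := by
      rw [Real.exp_add, ← Real.exp_nat_mul, mul_one]
    rw [h3] at h2
    calc ‖q n‖ = (n.factorial : ℝ)⁻¹ * ‖iteratedFDeriv ℂ n f z₀‖ := by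
          simp only [q]
          rw [norm_smul, norm_inv, Complex.norm_natCast]
      _ ≤ (n.factorial : ℝ)⁻¹ * (M * (9 / (R / (n + 1))) ^ n) := by gcongr
      _ = M * (9 / R) ^ n * ((n + 1 : ℝ) ^ n / n.factorial) := by
          rw [show (9 : ℝ) / (R / (n + 1)) = 9 / R * (n + 1) by field_simp, mul_pow]
          ring
      _ ≤ M * (9 / R) ^ n * (Real.exp 1 ^ n * Real.exp 1) := by gcongr
      _ = _ := by
          rw [show 9 * Real.exp 1 / R = 9 / R * Real.exp 1 by ring, mul_pow]
          ring
  have hq2 : ∀ l ∈ S, ∀ n, ∀ y : Z, l (q n (fun _ => y)) =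
      (n.factorial : ℂ)⁻¹ • iteratedFDeriv ℂ n (fun w => l (f w)) z₀ (fun _ => y) := by
    intro l hl n y
    have h1 := (aux_iter S hS f z₀ R M (R / (n + 1)) (hδ n) hM hf n).2 z₀ (hmem n) l hl (fun _ => y)
    simp only [q]
    rw [smul_apply, map_smul, h1]
  let τ : NNReal := ⟨R / (9 * Real.exp 1), by positivity⟩
  have hτ0 : 0 < τ := by
    rw [← NNReal.coe_pos]
    change 0 < R / (9 * Real.exp 1)
    positivity
  have hτR : (τ : ℝ) ≤ R := by
    change R / (9 * Real.exp 1) ≤ R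
    apply div_le_self hR.le
    have := Real.add_one_le_exp (1 : ℝ)
    linarith
  have hrad : (τ : ENNReal) ≤ q.radius := by
    refine q.le_radius_of_bound (M * Real.exp 1) fun n => ?_
    calc ‖q n‖ * (τ : ℝ) ^ n ≤ (M * Real.exp 1 * (9 * Real.exp 1 / R) ^ n) * (R / (9 * Real.exp 1)) ^ n := by
          gcongr
          · exact hq1 n
          · exact le_refl _
      _ = M * Real.exp 1 := by
          rw [mul_assoc, ← mul_pow]
          have : 9 * Real.exp 1 / R * (R / (9 * Real.exp 1)) = 1 := by
            have := Real.exp_pos 1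
            field_simp
          rw [this, one_pow, mul_one]
  have hτ0' : (0 : ENNReal) < τ := by exact_mod_cast hτ0
  have hF := (q.hasFPowerSeriesOnBall (hτ0'.trans_le hrad)).mono hτ0' hrad
  have hball : Metric.eball (0 : Z) τ = ball 0 (τ : ℝ) := Metric.eball_coe
  have heq : ∀ y ∈ ball (0 : Z) (τ : ℝ), q.sum y = f (z₀ + y) := by
    intro y hy
    rw [← sub_eq_zero]
    refine hS _ fun l hl => ?_
    rw [map_sub, sub_eq_zero]
    have a1 : AnalyticOnNhd ℂ (fun y => l (q.sum y)) (ball (0 : Z) (τ : ℝ)) := by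
      intro w hw
      exact (l.analyticAt _).comp (hF.analyticOnNhd w (by rwa [hball]))
    have a2 : AnalyticOnNhd ℂ (fun y => l (f (z₀ + y))) (ball (0 : Z) (τ : ℝ)) := by
      intro w hw
      have hm : z₀ + w ∈ ball z₀ R := by
        rw [mem_ball_zero_iff] at hw
        rw [mem_ball, dist_eq_norm, add_sub_cancel_left]
        linarith
      exact (hf l hl _ hm).comp (g := fun w => l (f w)) (f := fun y => z₀ + y) 
        (analyticAt_const.add analyticAt_id)
    refine a1.eqOn_of_preconnected_of_eventuallyEq a2 (convex_ball _ _).isPreconnected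
      (mem_ball_self (by exact_mod_cast hτ0)) ?_ hy
    obtain ⟨p, ε, hp⟩ := hf l hl z₀ (mem_ball_self hR)
    filter_upwards [Metric.eball_mem_nhds (0 : Z) hp.r_pos, Metric.eball_mem_nhds (0 : Z) hτ0'] with x hx1 hx2
    have s1 := hp.hasSum_iteratedFDeriv hx1
    have s2 := l.hasSum (hF.hasSum hx2)
    rw [zero_add] at s2
    refine s2.unique ?_
    refine s1.congr_fun ?_
    intro n
    exact hq2 l hl n x
  refine ⟨q, τ, hrad, hτ0', ?_⟩
  intro y hy
  have := hF.hasSum hy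
  rw [zero_add, heq y (by rwa [← hball])] at this
  exact this


/-- Lemma on analyticity in weaker spaces: if `A : X → L(E₁,F₁)` is analytic (on an open
set `X` of a complex Banach space, serving as a chart of the Banach manifold), each `A z`
extends to a bounded operator `E₂ → F₂` through dense continuous embeddings
`J₁ : E₁ ↪ E₂` and `J₂ : F₂ ↪ F₁`, and the extensions are locally uniformly bounded in the
`L(E₂,F₂)` norm, then the extension family is analytic as a map into `L(E₂,F₂)`. -/
theorem analytic_in_weaker_spaces
    {Z E₁ E₂ F₁ F₂ : Type*} [NormedAddCommGroup Z] [NormedSpace ℂ Z]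
    [NormedAddCommGroup E₁] [NormedSpace ℂ E₁] [CompleteSpace E₁]
    [NormedAddCommGroup E₂] [NormedSpace ℂ E₂] [CompleteSpace E₂]
    [NormedAddCommGroup F₁] [NormedSpace ℂ F₁] [CompleteSpace F₁]
    [NormedAddCommGroup F₂] [NormedSpace ℂ F₂] [CompleteSpace F₂]
    (X : Set Z) (hXopen : IsOpen X)
    (J₁ : E₁ →L[ℂ] E₂) (hJ₁inj : Function.Injective J₁)
    (hJ₁dense : DenseRange J₁)
    (J₂ : F₂ →L[ℂ] F₁) (hJ₂inj : Function.Injective J₂)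
    (hJ₂dense : DenseRange J₂)
    (A : Z → E₁ →L[ℂ] F₁) (hA : AnalyticOnNhd ℂ A X)
    (B : Z → E₂ →L[ℂ] F₂)
    (hext : ∀ z ∈ X, ∀ e : E₁, J₂ (B z (J₁ e)) = A z e)
    (hbdd : ∀ z ∈ X, ∃ M r : ℝ, 0 < M ∧ 0 < r ∧
      ∀ w ∈ X, ‖w - z‖ < r → ‖B w‖ < M) :
    AnalyticOnNhd ℂ B X := by
  intro z hz
  obtain ⟨M, r, hM, hr, hb⟩ := hbdd z hz
  obtain ⟨ε, hε, hεX⟩ := Metric.isOpen_iff.1 hXopen z hz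
  have hX' : ball z (min ε r) ⊆ X := (ball_subset_ball (min_le_left _ _)).trans hεX
  refine aux_analytic {T | ∃ (φ : F₁ →L[ℂ] ℂ) (e : E₁),
      T = (φ ∘L J₂) ∘L (ContinuousLinearMap.apply ℂ F₂ (J₁ e))} ?_ B z (min ε r) M (lt_min hε hr) ?_ ?_
  · intro T hT
    have h1 : ∀ e : E₁, T (J₁ e) = 0 := by
      intro e
      apply hJ₂inj
      rw [map_zero]
      by_contra hne
      obtain ⟨φ, -, hφ⟩ := exists_dual_vector ℂ (J₂ (T (J₁ e))) (norm_ne_zero_iff.2 hne)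
      have h2 : φ (J₂ (T (J₁ e))) = 0 := hT _ ⟨φ, e, rfl⟩
      rw [h2] at hφ
      have h3 : ‖J₂ (T (J₁ e))‖ = 0 := by
        have h4 := congrArg norm hφ
        simpa using h4.symm
      exact hne (norm_eq_zero.1 h3)
    have h2 : (T : E₂ → F₂) = fun _ => 0 :=
      hJ₁dense.equalizer T.continuous continuous_const (funext h1)
    ext x
    exact congrFun h2 x
  · intro w hw
    refine (hb w (hX' hw) ?_).le
    rw [← dist_eq_norm]
    exact (mem_ball.1 hw).trans_le (min_le_right _ _)
  · rintro _ ⟨φ, e, rfl⟩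
    have h1 : AnalyticOnNhd ℂ (fun w => φ (A w e)) (ball z (min ε r)) := by
      intro w hw
      exact ((φ ∘L (ContinuousLinearMap.apply ℂ F₁ e)).analyticAt _).comp (hA w (hX' hw))
    refine h1.congr isOpen_ball fun w hw => ?_
    change φ (A w e) = φ (J₂ (B w (J₁ e)))
    rw [hext w (hX' hw)]
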